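/- Assume 0 ≤ α < N, p, q > 0, μ ∈ ℝ, ρ > 0, and that the Dirichlet eigenpair hypothesis holds for (Ω, λ₁, φ). Let u be a positive solution of (E): −Δu − μ|x|^{−2}u ≥ (|x|^{−α} * u^p) u^q in C_Ω^ρ. Let η : ℝ → ℝ be C², compactly supported, with 0 ≤ η ≤ 1, support of η contained in [1,4], and η ≡ 1 on [2,3]; for R > 0 set η_R(x) = η(|x|/R). Then for every λ > 4 and every m with 0 ≤ m < 1, there exists a constant C > 0, independent of R, such that for all R > max{ρ, e}: (∫_{C_Ω^ρ} u(x)^{(p+q−m)/2}·φ(x/|x|)^{1/2}·η_R(x)^{λ/2} dx)² ≤ C·R^{α−2}·∫_{C_Ω^ρ} u(x)^{1−m}·φ(x/|x|)·η_R(x)^{λ−2} dx. -/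

import Mathlib

open MeasureTheory Real Set
open scoped ENNReal NNReal

noncomputable section

/-- Euclidean space `ℝ^N`. -/
abbrev Euc (N : ℕ) := EuclideanSpace ℝ (Fin N)

/-- The Euclidean Laplacian `Δu(x) = ∑ ∂²u/∂xᵢ²(x)`, the trace of the Hessian. -/
def lap (N : ℕ) (u : Euc N → ℝ) (x : Euc N) : ℝ :=
  ∑ i : Fin N,
    iteratedFDeriv ℝ 2 u x ![EuclideanSpace.single i 1, EuclideanSpace.single i 1]

/-- The open cone `C_Ω^ρ = {x : |x| > ρ, x/|x| ∈ Ω}`. -/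
def coneGT (N : ℕ) (ρ : ℝ) (Ω : Set (Euc N)) : Set (Euc N) :=
  {x | ρ < ‖x‖ ∧ ‖x‖⁻¹ • x ∈ Ω}

/-- The full open cone `C_Ω = {x ≠ 0 : x/|x| ∈ Ω}`. -/
def cone (N : ℕ) (Ω : Set (Euc N)) : Set (Euc N) :=
  {x | x ≠ 0 ∧ ‖x‖⁻¹ • x ∈ Ω}

/-- `Ω` is a nonempty, connected, relatively open subset of the unit sphere `S^{N-1}`. -/
def IsConeDomain (N : ℕ) (Ω : Set (Euc N)) : Prop :=
  Ω ⊆ Metric.sphere (0 : Euc N) 1 ∧ IsConnected Ω ∧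
    IsOpen {ω : Metric.sphere (0 : Euc N) 1 | (ω : Euc N) ∈ Ω}

/-- The convolution `(|x|^{-α} * f)(x) = ∫_{C_Ω^ρ} f(y)|x-y|^{-α} dy`, valued in `[0,∞]`. -/
def rieszConv (N : ℕ) (α ρ : ℝ) (Ω : Set (Euc N)) (f : Euc N → ℝ) (x : Euc N) : ℝ≥0∞ :=
  ∫⁻ y in coneGT N ρ Ω, ENNReal.ofReal (f y * ‖x - y‖ ^ (-α))

/-- Dirichlet eigenpair hypothesis for `(Ω, λ₁, φ)`: `φ` is continuous on the closure of `Ω`,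
positive on `Ω`, vanishing on the relative boundary, with maximum `1`, and its 0-homogeneous
extension `Φ(x) = φ(x/|x|)` is `C²` on the open cone and satisfies `ΔΦ = -λ₁|x|⁻²Φ`. -/
structure DirichletEigenpair (N : ℕ) (Ω : Set (Euc N)) (lam1 : ℝ) (φ : Euc N → ℝ) : Prop where
  contOn : ContinuousOn φ (closure Ω)
  pos : ∀ ω ∈ Ω, 0 < φ ω
  bdryZero : ∀ ω ∈ closure Ω \ Ω, φ ω = 0
  le_one : ∀ ω ∈ closure Ω, φ ω ≤ 1
  max_one : ∃ ω ∈ closure Ω, φ ω = 1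
  smoothExt : ContDiffOn ℝ 2 (fun x => φ (‖x‖⁻¹ • x)) (cone N Ω)
  eigen : ∀ x ∈ cone N Ω,
    lap N (fun y => φ (‖y‖⁻¹ • y)) x = -lam1 * ‖x‖ ^ (-(2:ℝ)) * φ (‖x‖⁻¹ • x)

/-- The Hardy constant `C_{H,Ω} = λ₁ + ((N-2)/2)²`. -/
def CHconst (N : ℕ) (lam1 : ℝ) : ℝ := lam1 + (((N : ℝ) - 2) / 2) ^ 2

/-- The smaller root `γ_*` of `γ(γ + N - 2) = λ₁ - μ`. -/
def gammaStar (N : ℕ) (lam1 μ : ℝ) : ℝ :=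
  (-((N : ℝ) - 2) - Real.sqrt (((N : ℝ) - 2) ^ 2 + 4 * (lam1 - μ))) / 2

/-- A positive (classical) solution of `(E) : -Δu - μ|x|⁻²u ≥ (|x|^{-α} * uᵖ) u^q` in `C_Ω^ρ`. -/
def IsPosSolE (N : ℕ) (ρ μ α p q : ℝ) (Ω : Set (Euc N)) (u : Euc N → ℝ) : Prop :=
  ContDiffOn ℝ 2 u (coneGT N ρ Ω) ∧
  ContinuousOn u (closure (coneGT N ρ Ω)) ∧
  (∀ x ∈ coneGT N ρ Ω, 0 < u x) ∧
  (∀ x ∈ coneGT N ρ Ω, rieszConv N α ρ Ω (fun y => u y ^ p) x < ⊤) ∧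
  (∀ x ∈ coneGT N ρ Ω,
    (rieszConv N α ρ Ω (fun y => u y ^ p) x).toReal * u x ^ q ≤
      -lap N u x - μ * ‖x‖ ^ (-(2:ℝ)) * u x)

/-- A positive solution of `(Z) : -Δu - μ|x|⁻²u ≥ (∫_{C_Ω^ρ} uᵖ) u^q` in `C_Ω^ρ`. -/
def IsPosSolZ (N : ℕ) (ρ μ p q : ℝ) (Ω : Set (Euc N)) (u : Euc N → ℝ) : Prop :=
  ContDiffOn ℝ 2 u (coneGT N ρ Ω) ∧
  ContinuousOn u (closure (coneGT N ρ Ω)) ∧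
  (∀ x ∈ coneGT N ρ Ω, 0 < u x) ∧
  (∫⁻ y in coneGT N ρ Ω, ENNReal.ofReal (u y ^ p)) < ⊤ ∧
  (∀ x ∈ coneGT N ρ Ω,
    (∫⁻ y in coneGT N ρ Ω, ENNReal.ofReal (u y ^ p)).toReal * u x ^ q ≤
      -lap N u x - μ * ‖x‖ ^ (-(2:ℝ)) * u x)

/-- A positive solution `(u, v)` of the system `(S)` in `C_Ω^ρ`. -/
def IsPosSolS (N : ℕ) (ρ μ α p q s : ℝ) (Ω : Set (Euc N)) (u v : Euc N → ℝ) : Prop :=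
  ContDiffOn ℝ 2 u (coneGT N ρ Ω) ∧ ContinuousOn u (closure (coneGT N ρ Ω)) ∧
  ContDiffOn ℝ 2 v (coneGT N ρ Ω) ∧ ContinuousOn v (closure (coneGT N ρ Ω)) ∧
  (∀ x ∈ coneGT N ρ Ω, 0 < u x) ∧ (∀ x ∈ coneGT N ρ Ω, 0 < v x) ∧
  (∀ x ∈ coneGT N ρ Ω, rieszConv N α ρ Ω (fun y => v y ^ p) x < ⊤) ∧
  (∀ x ∈ coneGT N ρ Ω,
    (rieszConv N α ρ Ω (fun y => v y ^ p) x).toReal * v x ^ q ≤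
      -lap N u x - μ * ‖x‖ ^ (-(2:ℝ)) * u x) ∧
  (∀ x ∈ coneGT N ρ Ω, u x ^ s ≤ -lap N v x - μ * ‖x‖ ^ (-(2:ℝ)) * v x)

/-!
Since `t ↦ t^(1-m)` is concave, `u^(1-m)` is a supersolution of the equation obtained by
multiplying `(E)` by `(1-m) u^(-m)`. It is tested against `h_ε(Φ) η_R^λ`, where the convex
truncation `h_ε` of `Φ(x) = φ(x/|x|)` vanishes near the lateral boundary of the cone. Green's
formula puts the Laplacian on the test function; there the cross term `∇Φ · ∇η_R` vanishes, `Φ`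
being `0`-homogeneous and `η_R` radial, and the other terms are `O(R⁻²) Φ η_R^(λ-2)`. Letting
`ε → 0` by Fatou's lemma bounds the convolution term. For `x` in the annulus `R ≤ |x| ≤ 4R` the
convolution is at least `(8R)^(-α) ∫ u^p` over that annulus, and the Cauchy–Schwarz inequality
joins `∫ u^p` and `∫ u^(q-m) Φ η_R^λ` into the square on the left-hand side.
-/

open Filter InnerProductSpace
open scoped Topology Gradient Laplacian

section SecondDerivative

variable {E : Type*} [NormedAddCommGroup E] [NormedSpace ℝ E] {f g : E → ℝ} {x : E}

lemma fderiv_fderiv_apply (hf : ContDiffAt ℝ 2 f x) (v w : E) :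
    fderiv ℝ (fun y ↦ fderiv ℝ f y v) x w = fderiv ℝ (fderiv ℝ f) x w v := by
  rw [fderiv_clm_apply ((hf.fderiv_right (m := 1) le_rfl).differentiableAt one_ne_zero)
    (differentiableAt_const v)]
  simp

lemma fderiv_fderiv_mul (hf : ContDiffAt ℝ 2 f x) (hg : ContDiffAt ℝ 2 g x) (v : E) :
    fderiv ℝ (fderiv ℝ fun y ↦ f y * g y) x v v =
      f x * fderiv ℝ (fderiv ℝ g) x v v + g x * fderiv ℝ (fderiv ℝ f) x v v +
        2 * (fderiv ℝ f x v * fderiv ℝ g x v) := by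
  have hf₁ := (hf.differentiableAt two_ne_zero).hasFDerivAt
  have hg₁ := (hg.differentiableAt two_ne_zero).hasFDerivAt
  have hf₂ := ((hf.fderiv_right (m := 1) le_rfl).differentiableAt one_ne_zero).hasFDerivAt
  have hg₂ := ((hg.fderiv_right (m := 1) le_rfl).differentiableAt one_ne_zero).hasFDerivAt
  have hfderiv : (fderiv ℝ fun y ↦ f y * g y) =ᶠ[𝓝 x]
      fun y ↦ f y • fderiv ℝ g y + g y • fderiv ℝ f y := by
    filter_upwards [hf.eventually (by simp), hg.eventually (by simp)] with y hfy hgy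
    exact fderiv_fun_mul (hfy.differentiableAt two_ne_zero) (hgy.differentiableAt two_ne_zero)
  rw [hfderiv.fderiv_eq, ((hf₁.fun_smul hg₂).fun_add (hg₁.fun_smul hf₂)).fderiv]
  simp only [add_apply, _root_.smul_apply, ContinuousLinearMap.smulRight_apply, smul_eq_mul]
  ring

lemma fderiv_fderiv_comp {h : ℝ → ℝ} (hh : ContDiffAt ℝ 2 h (f x)) (hf : ContDiffAt ℝ 2 f x)
    (v : E) :
    fderiv ℝ (fderiv ℝ fun y ↦ h (f y)) x v v =
      deriv h (f x) * fderiv ℝ (fderiv ℝ f) x v v +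
        deriv (deriv h) (f x) * fderiv ℝ f x v ^ 2 := by
  have hf₁ := (hf.differentiableAt two_ne_zero).hasFDerivAt
  have hf₂ := ((hf.fderiv_right (m := 1) le_rfl).differentiableAt one_ne_zero).hasFDerivAt
  have hh₂ : HasDerivAt (deriv h) (deriv (deriv h) (f x)) (f x) :=
    ((hh.derivWithin (m := 1) le_rfl).differentiableAt one_ne_zero).hasDerivAt
  have hhf : HasFDerivAt (fun y ↦ deriv h (f y)) _ x := hh₂.comp_hasFDerivAt x hf₁
  have hfderiv : (fderiv ℝ fun y ↦ h (f y)) =ᶠ[𝓝 x] fun y ↦ deriv h (f y) • fderiv ℝ f y := by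
    filter_upwards [hf.continuousAt.eventually (hh.eventually (by simp)),
      hf.eventually (by simp)] with y hhy hfy
    exact ((hhy.differentiableAt two_ne_zero).hasDerivAt.comp_hasFDerivAt y
      (hfy.differentiableAt two_ne_zero).hasFDerivAt).fderiv
  rw [hfderiv.fderiv_eq, (hhf.fun_smul hf₂).fderiv]
  simp only [add_apply, _root_.smul_apply, ContinuousLinearMap.smulRight_apply, smul_eq_mul]
  ring

end SecondDerivative

section Laplacian

variable {E : Type*} [NormedAddCommGroup E] [InnerProductSpace ℝ E] [FiniteDimensional ℝ E]
  {f g : E → ℝ} {x : E}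

lemma laplacian_eq_sum_fderiv_fderiv {ι : Type*} [Fintype ι] (b : OrthonormalBasis ι ℝ E)
    (f : E → ℝ) (x : E) : Δ f x = ∑ i, fderiv ℝ (fderiv ℝ f) x (b i) (b i) := by
  rw [laplacian_eq_iteratedFDeriv_orthonormalBasis f b]
  simp [iteratedFDeriv_two_apply]

lemma sum_fderiv_mul_fderiv {ι : Type*} [Fintype ι] (b : OrthonormalBasis ι ℝ E)
    (f g : E → ℝ) (x : E) :
    ∑ i, fderiv ℝ f x (b i) * fderiv ℝ g x (b i) = ⟪∇ f x, ∇ g x⟫_ℝ := by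
  rw [← b.sum_inner_mul_inner]
  exact Finset.sum_congr rfl fun i _ ↦ by rw [inner_gradient_left, real_inner_comm,
    inner_gradient_left]

lemma continuousOn_laplacian {U : Set E} (hU : IsOpen U) (hf : ContDiffOn ℝ 2 f U) :
    ContinuousOn (Δ f) U := by
  have hf₂ := (hf.fderiv_of_isOpen hU le_rfl).continuousOn_fderiv_of_isOpen hU le_rfl
  rw [funext (laplacian_eq_sum_fderiv_fderiv (stdOrthonormalBasis ℝ E) f)]
  exact continuousOn_finsetSum _ fun i _ ↦
    (hf₂.clm_apply continuousOn_const).clm_apply continuousOn_const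

lemma tsupport_laplacian_subset (f : E → ℝ) : tsupport (Δ f) ⊆ tsupport f := by
  refine closure_minimal (fun x hx ↦ ?_) (isClosed_tsupport f)
  contrapose! hx
  rw [notMem_tsupport_iff_eventuallyEq] at hx
  rw [Function.notMem_support, (laplacian_congr_nhds hx).eq_of_nhds]
  exact congrFun (laplacian_const (c := (0 : ℝ))) x

lemma laplacian_mul (hf : ContDiffAt ℝ 2 f x) (hg : ContDiffAt ℝ 2 g x) :
    Δ (fun y ↦ f y * g y) x = f x * Δ g x + g x * Δ f x + 2 * ⟪∇ f x, ∇ g x⟫_ℝ := by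
  let b := stdOrthonormalBasis ℝ E
  simp only [laplacian_eq_sum_fderiv_fderiv b, ← sum_fderiv_mul_fderiv b, Finset.mul_sum,
    ← Finset.sum_add_distrib, fderiv_fderiv_mul hf hg]

lemma laplacian_comp {h : ℝ → ℝ} (hh : ContDiffAt ℝ 2 h (f x)) (hf : ContDiffAt ℝ 2 f x) :
    Δ (fun y ↦ h (f y)) x =
      deriv h (f x) * Δ f x + deriv (deriv h) (f x) * ‖∇ f x‖ ^ 2 := by
  let b := stdOrthonormalBasis ℝ E
  rw [← real_inner_self_eq_norm_sq, ← sum_fderiv_mul_fderiv b]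
  simp only [laplacian_eq_sum_fderiv_fderiv b, Finset.mul_sum, ← Finset.sum_add_distrib,
    fderiv_fderiv_comp hh hf, sq]

lemma laplacian_rpow {a : ℝ} (hf : ContDiffAt ℝ 2 f x) (ha : f x ≠ 0 ∨ 2 ≤ a) :
    Δ (fun y ↦ f y ^ a) x =
      a * f x ^ (a - 1) * Δ f x + a * (a - 1) * f x ^ (a - 2) * ‖∇ f x‖ ^ 2 := by
  rw [laplacian_comp (Real.contDiffAt_rpow_const (n := 2) (by exact_mod_cast ha)) hf,
    Real.deriv_rpow_const']
  simp only [deriv_const_mul_field, Real.deriv_rpow_const]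
  rw [show a - 1 - 1 = a - 2 by ring]
  ring

lemma gradient_comp {h : ℝ → ℝ} (hh : DifferentiableAt ℝ h (f x)) (hf : DifferentiableAt ℝ f x) :
    ∇ (fun y ↦ h (f y)) x = deriv h (f x) • ∇ f x := by
  refine HasGradientAt.gradient (hasGradientAt_iff_hasFDerivAt.mpr ?_)
  rw [map_smul, toDual_gradient]
  exact hh.hasDerivAt.comp_hasFDerivAt x hf.hasFDerivAt

lemma inner_gradient_self_of_eventually_smul_eq (hf : DifferentiableAt ℝ f x)
    (hinv : ∀ᶠ t : ℝ in 𝓝 1, f (t • x) = f x) : ⟪∇ f x, x⟫_ℝ = 0 := by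
  have hray : HasDerivAt (fun t : ℝ ↦ t • x) x 1 := by
    simpa only [id, one_smul] using (hasDerivAt_id (1 : ℝ)).smul_const x
  have hderiv : HasDerivAt (fun t : ℝ ↦ f (t • x)) (fderiv ℝ f x x) 1 :=
    HasFDerivAt.comp_hasDerivAt (l := f) 1 (by simpa only [one_smul] using hf.hasFDerivAt) hray
  rw [inner_gradient_left]
  exact hderiv.unique ((hasDerivAt_const 1 (f x)).congr_of_eventuallyEq hinv)

lemma laplacian_norm_sq (x : E) : Δ (fun y : E ↦ ‖y‖ ^ 2) x = 2 * Module.finrank ℝ E := by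
  let b := stdOrthonormalBasis ℝ E
  have hfderiv : fderiv ℝ (fun y : E ↦ ‖y‖ ^ 2) = fun y ↦ (2 : ℝ) • innerSL ℝ y := by
    ext y v
    simp
  have hfderiv₂ : HasFDerivAt (fun y : E ↦ (2 : ℝ) • innerSL ℝ y) ((2 : ℝ) • innerSL ℝ) x :=
    ((2 : ℝ) • innerSL ℝ).hasFDerivAt
  have hdiag (v : E) : fderiv ℝ (fun y : E ↦ (2 : ℝ) • innerSL ℝ y) x v v = 2 * ‖v‖ ^ 2 := by
    rw [hfderiv₂.fderiv, ← real_inner_self_eq_norm_sq]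
    rfl
  rw [laplacian_eq_sum_fderiv_fderiv b, hfderiv]
  simp [hdiag, mul_comm]

lemma gradient_norm (hx : x ≠ 0) : ∇ (fun y : E ↦ ‖y‖) x = ‖x‖⁻¹ • x := by
  have hsqrt := ((hasStrictFDerivAt_norm_sq x).hasFDerivAt).sqrt
    (pow_ne_zero 2 (norm_ne_zero_iff.mpr hx))
  simp only [Real.sqrt_sq (norm_nonneg _)] at hsqrt
  refine ext_inner_right ℝ fun v ↦ ?_
  rw [inner_gradient_left, hsqrt.fderiv]
  simp [real_inner_smul_left, mul_assoc]

lemma gradient_comp_norm {h : ℝ → ℝ} (hh : DifferentiableAt ℝ h ‖x‖) (hx : x ≠ 0) :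
    ∇ (fun y : E ↦ h ‖y‖) x = (deriv h ‖x‖ * ‖x‖⁻¹) • x := by
  rw [gradient_comp hh ((contDiffAt_norm ℝ hx).differentiableAt one_ne_zero), gradient_norm hx,
    smul_smul]

lemma norm_gradient_norm (hx : x ≠ 0) : ‖∇ (fun y : E ↦ ‖y‖) x‖ = 1 := by
  rw [gradient_norm hx]
  exact norm_smul_inv_norm (𝕜 := ℝ) hx

lemma laplacian_norm (hx : x ≠ 0) :
    Δ (fun y : E ↦ ‖y‖) x = (Module.finrank ℝ E - 1) / ‖x‖ := by
  have hnorm := contDiffAt_norm (n := 2) ℝ hx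
  have hmul := laplacian_mul hnorm hnorm
  simp only [← sq, laplacian_norm_sq, real_inner_self_eq_norm_sq, norm_gradient_norm hx] at hmul
  rw [eq_div_iff (norm_ne_zero_iff.mpr hx)]
  linarith

lemma laplacian_comp_norm {h : ℝ → ℝ} (hh : ContDiffAt ℝ 2 h ‖x‖) (hx : x ≠ 0) :
    Δ (fun y : E ↦ h ‖y‖) x =
      deriv (deriv h) ‖x‖ + (Module.finrank ℝ E - 1) / ‖x‖ * deriv h ‖x‖ := by
  rw [laplacian_comp hh (contDiffAt_norm ℝ hx), laplacian_norm hx, norm_gradient_norm hx]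
  ring

lemma laplacian_comp_norm_div {h : ℝ → ℝ} {R : ℝ} (hh : ContDiffAt ℝ 2 h (‖x‖ / R)) (hR : R ≠ 0)
    (hx : x ≠ 0) :
    Δ (fun y : E ↦ h (‖y‖ / R)) x =
      (deriv (deriv h) (‖x‖ / R) +
        (Module.finrank ℝ E - 1) * (deriv h (‖x‖ / R) / (‖x‖ / R))) / R ^ 2 := by
  have hderiv (g : ℝ → ℝ) : deriv (fun r ↦ g (r / R)) = fun r ↦ deriv g (r / R) / R := by
    ext r
    simpa only [div_eq_inv_mul, smul_eq_mul] using deriv_comp_mul_left R⁻¹ g r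
  have hh' : ContDiffAt ℝ 2 (fun r ↦ h (r / R)) ‖x‖ :=
    hh.comp (f := fun r ↦ r / R) ‖x‖ (contDiffAt_id.div_const R)
  rw [laplacian_comp_norm hh' hx, hderiv, deriv_div_const, hderiv]
  field

end Laplacian

section Green

variable {X : Type*} [TopologicalSpace X] [MeasurableSpace X] [OpensMeasurableSpace X] in
lemma integrable_mul_of_tsupport_subset {μ : Measure X} [IsFiniteMeasureOnCompacts μ]
    {U : Set X} (hU : IsOpen U) {f g : X → ℝ} (hf : ContinuousOn f U) (hg : Continuous g)
    (hgc : HasCompactSupport g) (hgU : tsupport g ⊆ U) : Integrable (fun x ↦ f x * g x) μ :=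
  ((hf.mul hg.continuousOn).continuous_of_tsupport_subset hU
    ((tsupport_mul_subset_right (f := f)).trans hgU)).integrable_of_hasCompactSupport
    hgc.mul_left

variable {E : Type*} [NormedAddCommGroup E] [InnerProductSpace ℝ E] [FiniteDimensional ℝ E]
  [MeasurableSpace E] [BorelSpace E] {μ : Measure E} [μ.IsAddHaarMeasure]
  {U : Set E} {f g : E → ℝ}

lemma integral_mul_fderiv_eq_neg_of_tsupport_subset (hU : IsOpen U) (hf : ContDiffOn ℝ 1 f U)
    (hg : ContDiff ℝ 1 g) (hgc : HasCompactSupport g) (hgU : tsupport g ⊆ U) (v : E) :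
    ∫ x, f x * fderiv ℝ g x v ∂μ = -∫ x, fderiv ℝ f x v * g x ∂μ := by
  have hg'U := (tsupport_fderiv_apply_subset ℝ v (f := g)).trans hgU
  have hf' : ContinuousOn (fun x ↦ fderiv ℝ f x v) U :=
    (hf.continuousOn_fderiv_of_isOpen hU le_rfl).clm_apply continuousOn_const
  have hg' : Continuous fun x ↦ fderiv ℝ g x v :=
    (hg.continuous_fderiv one_ne_zero).clm_apply continuous_const
  exact integral_mul_fderiv_eq_neg_fderiv_mul_of_integrable
    (integrable_mul_of_tsupport_subset hU hf' hg.continuous hgc hgU)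
    (integrable_mul_of_tsupport_subset hU hf.continuousOn hg' (hgc.fderiv_apply ℝ v) hg'U)
    (integrable_mul_of_tsupport_subset hU hf.continuousOn hg.continuous hgc hgU)
    (fun x hx ↦ (hf.differentiableOn one_ne_zero).differentiableAt (hU.mem_nhds (hgU hx)))
    (fun x _ ↦ hg.differentiable one_ne_zero x)

lemma integral_fderiv_fderiv_mul (hU : IsOpen U) (hf : ContDiffOn ℝ 2 f U)
    (hg : ContDiff ℝ 2 g) (hgc : HasCompactSupport g) (hgU : tsupport g ⊆ U) (v : E) :
    ∫ x, fderiv ℝ (fderiv ℝ f) x v v * g x ∂μ = ∫ x, f x * fderiv ℝ (fderiv ℝ g) x v v ∂μ := by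
  have hf' : ContDiffOn ℝ 1 (fun x ↦ fderiv ℝ f x v) U :=
    (hf.fderiv_of_isOpen hU le_rfl).clm_apply contDiffOn_const
  have hg' : ContDiff ℝ 1 fun x ↦ fderiv ℝ g x v :=
    (hg.fderiv_right le_rfl).clm_apply contDiff_const
  calc ∫ x, fderiv ℝ (fderiv ℝ f) x v v * g x ∂μ
      = ∫ x, fderiv ℝ (fun y ↦ fderiv ℝ f y v) x v * g x ∂μ := by
        refine integral_congr_ae (.of_forall fun x ↦ ?_)
        by_cases hx : x ∈ tsupport g
        · simp only [fderiv_fderiv_apply (hf.contDiffAt (hU.mem_nhds (hgU hx)))]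
        · simp only [image_eq_zero_of_notMem_tsupport hx, mul_zero]
    _ = -∫ x, fderiv ℝ f x v * fderiv ℝ g x v ∂μ := by
        rw [integral_mul_fderiv_eq_neg_of_tsupport_subset hU hf' (hg.of_le one_le_two) hgc hgU v,
          neg_neg]
    _ = ∫ x, f x * fderiv ℝ (fderiv ℝ g) x v v ∂μ := by
        rw [← integral_mul_fderiv_eq_neg_of_tsupport_subset hU (hf.of_le one_le_two) hg'
          (hgc.fderiv_apply ℝ v) ((tsupport_fderiv_apply_subset ℝ v).trans hgU) v]
        simp only [fderiv_fderiv_apply hg.contDiffAt]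

theorem integral_laplacian_mul (hU : IsOpen U) (hf : ContDiffOn ℝ 2 f U)
    (hg : ContDiff ℝ 2 g) (hgc : HasCompactSupport g) (hgU : tsupport g ⊆ U) :
    ∫ x, Δ f x * g x ∂μ = ∫ x, f x * Δ g x ∂μ := by
  let b := stdOrthonormalBasis ℝ E
  have hf'' := (hf.fderiv_of_isOpen hU le_rfl).continuousOn_fderiv_of_isOpen hU le_rfl
  simp only [laplacian_eq_sum_fderiv_fderiv b, Finset.sum_mul, Finset.mul_sum]
  rw [integral_finsetSum, integral_finsetSum]
  · exact Finset.sum_congr rfl fun i _ ↦ integral_fderiv_fderiv_mul hU hf hg hgc hgU (b i)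
  · intro i _
    simp only [← fderiv_fderiv_apply hg.contDiffAt]
    have hg' : ContDiff ℝ 1 fun x ↦ fderiv ℝ g x (b i) :=
      (hg.fderiv_right le_rfl).clm_apply contDiff_const
    exact integrable_mul_of_tsupport_subset hU hf.continuousOn
      ((hg'.continuous_fderiv one_ne_zero).clm_apply continuous_const)
      ((hgc.fderiv_apply ℝ (b i)).fderiv_apply ℝ (b i))
      (((tsupport_fderiv_apply_subset ℝ (b i)).trans
        (tsupport_fderiv_apply_subset ℝ (b i))).trans hgU)
  · intro i _
    exact integrable_mul_of_tsupport_subset hU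
      ((hf''.clm_apply continuousOn_const).clm_apply continuousOn_const) hg.continuous hgc hgU

end Green

section Truncation

/-- A smooth convex approximation of the identity on `[0, ∞)` from below, vanishing on `(-∞, ε]`.
Composing a positive function with it yields test functions that stay away from its zero set. -/
def truncation (ε t : ℝ) : ℝ := ∫ s in (0 : ℝ)..t, smoothTransition (s / ε - 1)

variable {ε t : ℝ}

lemma hasDerivAt_truncation (ε t : ℝ) :
    HasDerivAt (truncation ε) (smoothTransition (t / ε - 1)) t := by
  have hcont : Continuous fun s ↦ smoothTransition (s / ε - 1) :=
    smoothTransition.continuous.comp (by fun_prop)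
  exact intervalIntegral.integral_hasDerivAt_right (hcont.intervalIntegrable _ _)
    (hcont.stronglyMeasurableAtFilter _ _) hcont.continuousAt

lemma deriv_truncation (ε : ℝ) :
    deriv (truncation ε) = fun t ↦ smoothTransition (t / ε - 1) :=
  funext fun t ↦ (hasDerivAt_truncation ε t).deriv

lemma contDiff_truncation (ε : ℝ) : ContDiff ℝ 2 (truncation ε) := by
  refine contDiff_succ_iff_deriv (n := 1).mpr
    ⟨fun t ↦ (hasDerivAt_truncation ε t).differentiableAt, by simp, ?_⟩
  rw [deriv_truncation]
  exact smoothTransition.contDiff.comp (by fun_prop)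

lemma deriv_truncation_nonneg (ε t : ℝ) : 0 ≤ deriv (truncation ε) t := by
  rw [deriv_truncation]
  exact smoothTransition.nonneg _

lemma deriv_truncation_le_one (ε t : ℝ) : deriv (truncation ε) t ≤ 1 := by
  rw [deriv_truncation]
  exact smoothTransition.le_one _

lemma deriv_deriv_truncation_nonneg (hε : 0 ≤ ε) (t : ℝ) : 0 ≤ deriv (deriv (truncation ε)) t := by
  rw [deriv_truncation]
  refine Monotone.deriv_nonneg fun s t hst ↦ smoothTransition.monotone ?_
  gcongr

lemma monotone_truncation (ε : ℝ) : Monotone (truncation ε) :=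
  monotone_of_deriv_nonneg ((contDiff_truncation ε).differentiable two_ne_zero)
    (deriv_truncation_nonneg ε)

lemma truncation_of_le (hε : 0 < ε) (ht : t ≤ ε) : truncation ε t = 0 := by
  refine intervalIntegral.integral_zero_ae (.of_forall fun s hs ↦ ?_)
  have hsε : s ≤ ε := (uIoc_subset_uIcc hs).2.trans (max_le hε.le ht)
  exact smoothTransition.zero_of_nonpos (sub_nonpos.mpr ((div_le_one hε).mpr hsε))

lemma truncation_nonneg (hε : 0 < ε) (t : ℝ) : 0 ≤ truncation ε t := by
  rcases le_total t ε with ht | ht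
  · exact (truncation_of_le hε ht).ge
  · exact (truncation_of_le hε le_rfl).ge.trans (monotone_truncation ε ht)

lemma monotone_sub_truncation (ε : ℝ) : Monotone fun t ↦ t - truncation ε t := by
  have hd (t : ℝ) : HasDerivAt (fun t ↦ t - truncation ε t)
      (1 - smoothTransition (t / ε - 1)) t :=
    (hasDerivAt_id t).sub (hasDerivAt_truncation ε t)
  refine monotone_of_deriv_nonneg (fun t ↦ (hd t).differentiableAt) fun t ↦ ?_
  rw [(hd t).deriv]
  exact sub_nonneg.mpr (smoothTransition.le_one _)

lemma truncation_le (ht : 0 ≤ t) : truncation ε t ≤ t := by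
  have := monotone_sub_truncation ε ht
  simpa [truncation] using this

lemma sub_two_mul_le_truncation (hε : 0 < ε) (t : ℝ) : t - 2 * ε ≤ truncation ε t := by
  rcases le_total t (2 * ε) with ht | ht
  · linarith [truncation_nonneg hε t]
  have hdiff := (contDiff_truncation ε).differentiable two_ne_zero
  have hmean := (convex_Ici (2 * ε)).mul_sub_le_image_sub_of_le_deriv (C := 1)
    hdiff.continuous.continuousOn hdiff.differentiableOn (fun s hs ↦ ?_) _ self_mem_Ici _ ht ht
  · linarith [truncation_nonneg hε (2 * ε)]
  · rw [interior_Ici, mem_Ioi] at hs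
    refine (deriv_truncation ε ▸ smoothTransition.one_of_one_le ?_ : _ = (1 : ℝ)).ge
    rw [le_sub_iff_add_le, one_add_one_eq_two, le_div_iff₀ hε]
    exact hs.le

lemma tendsto_truncation (ht : 0 ≤ t) :
    Tendsto (fun ε ↦ truncation ε t) (𝓝[>] 0) (𝓝 t) := by
  have hlower : Tendsto (fun ε ↦ t - 2 * ε) (𝓝[>] 0) (𝓝 t) :=
    Tendsto.mono_left (Continuous.tendsto' (by fun_prop) _ _ (by simp)) nhdsWithin_le_nhds
  refine tendsto_of_tendsto_of_tendsto_of_le_of_le' hlower tendsto_const_nhds ?_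
    (.of_forall fun ε ↦ truncation_le ht)
  filter_upwards [self_mem_nhdsWithin] with ε hε using sub_two_mul_le_truncation hε t

end Truncation

section AnnularProfile

/-- The radial profiles of the cutoffs `η_R(x) = η(|x|/R)`, which live in the annulus
`R ≤ |x| ≤ 4R`. -/
structure IsAnnularProfile (η : ℝ → ℝ) : Prop where
  contDiff : ContDiff ℝ 2 η
  nonneg : ∀ t, 0 ≤ η t
  le_one : ∀ t, η t ≤ 1
  tsupport_subset : tsupport η ⊆ Icc 1 4

namespace IsAnnularProfile

variable {η : ℝ → ℝ} (hη : IsAnnularProfile η)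
include hη

lemma hasCompactSupport : HasCompactSupport η :=
  HasCompactSupport.of_support_subset_isCompact isCompact_Icc
    ((subset_tsupport η).trans hη.tsupport_subset)

lemma mem_Icc_of_ne_zero {t : ℝ} (ht : η t ≠ 0) : t ∈ Icc 1 4 :=
  hη.tsupport_subset (subset_tsupport η ht)

lemma exists_abs_deriv_le : ∃ M, 0 < M ∧ ∀ t, |deriv η t| ≤ M ∧ |deriv (deriv η) t| ≤ M := by
  have hη' : ContDiff ℝ 1 (deriv η) := ContDiff.deriv' (n := 1) hη.contDiff
  obtain ⟨M₁, hM₁⟩ := hη.hasCompactSupport.deriv.exists_bound_of_continuous hη'.continuous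
  obtain ⟨M₂, hM₂⟩ := hη.hasCompactSupport.deriv.deriv.exists_bound_of_continuous
    hη'.continuous_deriv_one
  exact ⟨max 1 (max M₁ M₂), lt_max_of_lt_left one_pos, fun t ↦ ⟨(hM₁ t).trans (by simp),
    (hM₂ t).trans (by simp)⟩⟩

variable {a : ℝ}

lemma contDiff_rpow (ha : 2 ≤ a) : ContDiff ℝ 2 fun t ↦ η t ^ a :=
  hη.contDiff.rpow_const_of_le (by exact_mod_cast ha)

lemma rpow_le_rpow {b : ℝ} (hb : 0 < b) (hba : b ≤ a) (t : ℝ) : η t ^ a ≤ η t ^ b :=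
  Real.rpow_le_rpow_of_exponent_ge_of_imp (hη.nonneg t) (hη.le_one t) hba
    fun _ ha₀ ↦ absurd ha₀ (hb.trans_le hba).ne'

lemma deriv_rpow (ha : 1 ≤ a) :
    (deriv fun t ↦ η t ^ a) = fun t ↦ deriv η t * a * η t ^ (a - 1) :=
  funext fun t ↦ deriv_rpow_const (hη.contDiff.differentiable two_ne_zero t) (.inr ha)

lemma deriv_deriv_rpow (ha : 2 ≤ a) (t : ℝ) :
    deriv (deriv fun t ↦ η t ^ a) t =
      a * η t ^ (a - 1) * deriv (deriv η) t + a * (a - 1) * η t ^ (a - 2) * deriv η t ^ 2 := by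
  have hη₁ := hη.contDiff.differentiable two_ne_zero t
  have hη₂ : DifferentiableAt ℝ (deriv η) t :=
    (ContDiff.deriv' (n := 1) hη.contDiff).differentiable one_ne_zero t
  have hpow := hη₁.hasDerivAt.rpow_const (p := a - 1) (.inr (by linarith))
  rw [hη.deriv_rpow (by linarith), ((hη₂.hasDerivAt.mul_const a).fun_mul hpow).deriv,
    show a - 1 - 1 = a - 2 by ring]
  ring

lemma exists_abs_deriv_rpow_le (ha : 2 < a) :
    ∃ M, 0 < M ∧ ∀ t, |deriv (fun t ↦ η t ^ a) t| ≤ M * η t ^ (a - 2) ∧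
      |deriv (deriv fun t ↦ η t ^ a) t| ≤ M * η t ^ (a - 2) := by
  obtain ⟨M, hM, hMη⟩ := hη.exists_abs_deriv_le
  have ha₀ : 0 < a := by linarith
  have ha₁ : 0 ≤ a * (a - 1) := mul_nonneg ha₀.le (by linarith)
  refine ⟨a * M + a * (a - 1) * M ^ 2, by positivity, fun t ↦ ?_⟩
  obtain ⟨hη', hη''⟩ := hMη t
  have hpow₂ : 0 ≤ η t ^ (a - 2) := Real.rpow_nonneg (hη.nonneg t) _
  have hpow₁ : 0 ≤ η t ^ (a - 1) := Real.rpow_nonneg (hη.nonneg t) _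
  have hpow : η t ^ (a - 1) ≤ η t ^ (a - 2) := hη.rpow_le_rpow (by linarith) (by linarith) t
  constructor
  · calc |deriv (fun t ↦ η t ^ a) t| = |deriv η t| * a * η t ^ (a - 1) := by
          rw [hη.deriv_rpow (by linarith), abs_mul, abs_mul, abs_of_pos ha₀,
            abs_of_nonneg hpow₁]
      _ ≤ M * a * η t ^ (a - 2) := by gcongr
      _ ≤ (a * M + a * (a - 1) * M ^ 2) * η t ^ (a - 2) := by
          gcongr
          linarith [mul_nonneg ha₁ (sq_nonneg M)]
  · calc |deriv (deriv fun t ↦ η t ^ a) t|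
        ≤ a * η t ^ (a - 1) * |deriv (deriv η) t| +
            a * (a - 1) * η t ^ (a - 2) * |deriv η t| ^ 2 := by
          rw [hη.deriv_deriv_rpow ha.le]
          refine (abs_add_le _ _).trans_eq ?_
          rw [abs_mul, abs_mul (_ * _) (_ ^ 2), abs_of_nonneg (mul_nonneg ha₀.le hpow₁),
            abs_of_nonneg (mul_nonneg ha₁ hpow₂), abs_pow]
      _ ≤ a * η t ^ (a - 2) * M + a * (a - 1) * η t ^ (a - 2) * M ^ 2 := by gcongr
      _ = (a * M + a * (a - 1) * M ^ 2) * η t ^ (a - 2) := by ring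

lemma abs_deriv_rpow_div_le (ha : 1 < a) (t : ℝ) :
    |deriv (fun t ↦ η t ^ a) t / t| ≤ |deriv (fun t ↦ η t ^ a) t| := by
  rcases eq_or_ne (η t) 0 with hzero | hne
  · simp [hη.deriv_rpow ha.le, hzero, Real.zero_rpow (sub_pos.mpr ha).ne']
  · rw [abs_div]
    exact div_le_self (abs_nonneg _) ((hη.mem_Icc_of_ne_zero hne).1.trans (le_abs_self t))

variable {E : Type*} [NormedAddCommGroup E] {R : ℝ} {x : E}

lemma norm_mem_Icc_of_ne_zero (hR : 0 < R) (hx : η (‖x‖ / R) ≠ 0) : ‖x‖ ∈ Icc R (4 * R) := by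
  have hmem := hη.mem_Icc_of_ne_zero hx
  exact ⟨(one_le_div hR).mp hmem.1, (div_le_iff₀ hR).mp hmem.2⟩

lemma enorm_rpow_mul_eq_indicator_rpow_mul {u : E → ℝ} {m p q s : ℝ} (ha : a ≠ 0)
    (hR : 0 < R) (hu : 0 < u x) (hs : 0 ≤ s) :
    ‖u x ^ ((p + q - m) / 2) * (s ^ (1 / 2 : ℝ) * η (‖x‖ / R) ^ (a / 2))‖ₑ =
      {x : E | ‖x‖ ∈ Icc R (4 * R)}.indicator (fun x ↦ .ofReal (u x ^ p)) x ^ (1 / 2 : ℝ) *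
        .ofReal (u x ^ (q - m) * (s * η (‖x‖ / R) ^ a)) ^ (1 / 2 : ℝ) := by
  rcases eq_or_ne (η (‖x‖ / R)) 0 with hzero | hne
  · simp [hzero, Real.zero_rpow ha, Real.zero_rpow (div_ne_zero ha two_ne_zero)]
  have hη₀ := hη.nonneg (‖x‖ / R)
  have hmem : x ∈ {x : E | ‖x‖ ∈ Icc R (4 * R)} := hη.norm_mem_Icc_of_ne_zero hR hne
  rw [indicator_of_mem hmem, Real.enorm_of_nonneg (by positivity),
    ENNReal.ofReal_rpow_of_nonneg (by positivity) (by positivity),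
    ENNReal.ofReal_rpow_of_nonneg (by positivity) (by positivity),
    ← ENNReal.ofReal_mul (by positivity), Real.mul_rpow (by positivity) (by positivity),
    Real.mul_rpow (by positivity) (by positivity), ← Real.rpow_mul hu.le, ← Real.rpow_mul hu.le,
    ← Real.rpow_mul hη₀, ← mul_assoc, ← mul_assoc, ← mul_assoc, ← Real.rpow_add hu]
  ring_nf

variable [InnerProductSpace ℝ E]

lemma contDiffAt_radial_rpow (ha : 2 ≤ a) (hx : x ≠ 0) :
    ContDiffAt ℝ 2 (fun y : E ↦ η (‖y‖ / R) ^ a) x :=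
  (hη.contDiff_rpow ha).contDiffAt.comp x ((contDiffAt_norm ℝ hx).div_const R)

variable (E) [FiniteDimensional ℝ E]

theorem exists_abs_laplacian_radial_rpow_le (ha : 2 < a) :
    ∃ M, 0 < M ∧ ∀ R > 0, ∀ x : E, x ≠ 0 →
      |Δ (fun y : E ↦ η (‖y‖ / R) ^ a) x| ≤ M / R ^ 2 * η (‖x‖ / R) ^ (a - 2) := by
  obtain ⟨M, hM, hMη⟩ := hη.exists_abs_deriv_rpow_le ha
  let d : ℝ := Module.finrank ℝ E - 1
  refine ⟨M + |d| * M, by positivity, fun R hR x hx ↦ ?_⟩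
  obtain ⟨hderiv, hderiv₂⟩ := hMη (‖x‖ / R)
  rw [laplacian_comp_norm_div (hη.contDiff_rpow ha.le).contDiffAt hR.ne' hx, abs_div,
    abs_of_pos (pow_pos hR 2), div_mul_eq_mul_div]
  gcongr
  calc _ ≤ M * η (‖x‖ / R) ^ (a - 2) + |d| * (M * η (‖x‖ / R) ^ (a - 2)) := by
        refine (abs_add_le _ _).trans ?_
        rw [abs_mul]
        gcongr
        exact (hη.abs_deriv_rpow_div_le (by linarith) _).trans hderiv
    _ = (M + |d| * M) * η (‖x‖ / R) ^ (a - 2) := by ring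

end IsAnnularProfile

end AnnularProfile

section Lintegral

variable {X : Type*} [MeasurableSpace X] {μ : Measure X}

lemma lintegral_le_of_tendsto {ι : Type*} {l : Filter ι} [l.NeBot] [l.IsCountablyGenerated]
    {f : ι → X → ℝ≥0∞} {g : X → ℝ≥0∞} {B : ℝ≥0∞} (hf : ∀ i, AEMeasurable (f i) μ)
    (hlim : ∀ᵐ x ∂μ, Tendsto (fun i ↦ f i x) l (𝓝 (g x)))
    (hB : ∀ᶠ i in l, ∫⁻ x, f i x ∂μ ≤ B) : ∫⁻ x, g x ∂μ ≤ B :=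
  calc ∫⁻ x, g x ∂μ = ∫⁻ x, liminf (fun i ↦ f i x) l ∂μ :=
        lintegral_congr_ae (hlim.mono fun x hx ↦ hx.liminf_eq.symm)
    _ ≤ liminf (fun i ↦ ∫⁻ x, f i x ∂μ) l := lintegral_liminf_le' hf
    _ ≤ B := (liminf_le_liminf hB).trans_eq (liminf_const B)

lemma sq_lintegral_rpow_half_mul_le {f g : X → ℝ≥0∞} (hf : AEMeasurable f μ)
    (hg : AEMeasurable g μ) :
    (∫⁻ x, f x ^ (1 / 2 : ℝ) * g x ^ (1 / 2 : ℝ) ∂μ) ^ 2 ≤ (∫⁻ x, f x ∂μ) * ∫⁻ x, g x ∂μ := by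
  calc _ ≤ ((∫⁻ x, f x ∂μ) ^ (1 / 2 : ℝ) * (∫⁻ x, g x ∂μ) ^ (1 / 2 : ℝ)) ^ 2 := by
        gcongr
        exact ENNReal.lintegral_mul_norm_pow_le hf hg (by positivity) (by positivity)
          (add_halves 1)
    _ = (∫⁻ x, f x ∂μ) * ∫⁻ x, g x ∂μ := by
        rw [← ENNReal.mul_rpow_of_nonneg _ _ (by positivity), ← ENNReal.rpow_mul_natCast]
        simp

end Lintegral

section Supersolution

variable {E : Type*} [NormedAddCommGroup E] [InnerProductSpace ℝ E] [FiniteDimensional ℝ E]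

lemma one_sub_mul_rpow_neg_mul_le_neg_laplacian_rpow {u : E → ℝ} {x : E} {m : ℝ}
    (hu : ContDiffAt ℝ 2 u x) (hpos : 0 < u x) (hm₀ : 0 ≤ m) (hm₁ : m ≤ 1) :
    (1 - m) * u x ^ (-m) * -Δ u x ≤ -Δ (fun y ↦ u y ^ (1 - m)) x := by
  have hconcave : (1 - m) * (-m) * u x ^ (1 - m - 2) * ‖∇ u x‖ ^ 2 ≤ 0 := by
    have hm : (1 - m) * -m ≤ 0 := mul_nonpos_of_nonneg_of_nonpos (by linarith) (by linarith)
    have hpow : 0 ≤ u x ^ (1 - m - 2) := by positivity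
    exact mul_nonpos_of_nonpos_of_nonneg (mul_nonpos_of_nonpos_of_nonneg hm hpow) (sq_nonneg _)
  rw [laplacian_rpow hu (.inl hpos.ne'), show 1 - m - 1 = -m by ring]
  linarith

variable [MeasurableSpace E] [BorelSpace E] {ν : Measure E} [ν.IsAddHaarMeasure] {U : Set E}

lemma integrable_mul_laplacian {v ψ : E → ℝ} (hU : IsOpen U) (hv : ContinuousOn v U)
    (hψ : ContDiff ℝ 2 ψ) (hψc : HasCompactSupport ψ) (hψU : tsupport ψ ⊆ U) :
    Integrable (fun x ↦ v x * Δ ψ x) ν := by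
  have hsupport := tsupport_laplacian_subset ψ
  exact integrable_mul_of_tsupport_subset hU hv
    (continuousOn_univ.mp (continuousOn_laplacian isOpen_univ hψ.contDiffOn))
    (hψc.mono' (subset_closure.trans hsupport)) (hsupport.trans hψU)

variable {f v ψ w : E → ℝ} {c K : ℝ} (hU : IsOpen U) (hf : ContinuousOn f U)
  (hv : ContDiffOn ℝ 2 v U) (hψ : ContDiff ℝ 2 ψ) (hψc : HasCompactSupport ψ)
  (hψU : tsupport ψ ⊆ U) (hψ₀ : ∀ x, 0 ≤ ψ x) (hfv : ∀ x, ψ x ≠ 0 → f x ≤ -Δ v x + c * v x)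
include hU hf hv hψ hψc hψU hψ₀ hfv

lemma integral_mul_le_integral_mul_neg_laplacian_add :
    ∫ x, f x * ψ x ∂ν ≤ ∫ x, v x * (-Δ ψ x + c * ψ x) ∂ν := by
  have hint {g : E → ℝ} (hg : ContinuousOn g U) : Integrable (fun x ↦ g x * ψ x) ν :=
    integrable_mul_of_tsupport_subset hU hg hψ.continuous hψc hψU
  have hΔv := hint (continuousOn_laplacian hU hv)
  have hvΔ := integrable_mul_laplacian (ν := ν) hU hv.continuousOn hψ hψc hψU
  have hcv := (hint hv.continuousOn).const_mul c
  calc ∫ x, f x * ψ x ∂ν ≤ ∫ x, c * (v x * ψ x) - Δ v x * ψ x ∂ν := by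
        refine integral_mono (hint hf) (hcv.sub hΔv) fun x ↦ ?_
        rcases eq_or_ne (ψ x) 0 with hzero | hne
        · simp only [hzero, mul_zero, sub_zero, le_refl]
        · linarith [mul_le_mul_of_nonneg_right (hfv x hne) (hψ₀ x)]
    _ = ∫ x, c * (v x * ψ x) - v x * Δ ψ x ∂ν := by
        rw [integral_sub hcv hΔv, integral_sub hcv hvΔ, integral_laplacian_mul hU hv hψ hψc hψU]
    _ = ∫ x, v x * (-Δ ψ x + c * ψ x) ∂ν := by ring_nf

theorem integral_mul_le_setIntegral_mul_of_le_neg_laplacian_add (hv₀ : ∀ x ∈ U, 0 ≤ v x)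
    (hψw : ∀ x ∈ U, -Δ ψ x + c * ψ x ≤ K * w x)
    (hint : IntegrableOn (fun x ↦ v x * w x) U ν) :
    ∫ x, f x * ψ x ∂ν ≤ K * ∫ x in U, v x * w x ∂ν := by
  have hintv : Integrable (fun x ↦ v x * (-Δ ψ x + c * ψ x)) ν :=
    ((integrable_mul_laplacian hU hv.continuousOn hψ hψc hψU).neg.add
      ((integrable_mul_of_tsupport_subset hU hv.continuousOn hψ.continuous hψc hψU).const_mul
        c)).congr (.of_forall fun x ↦ by simp only [Pi.add_apply, Pi.neg_apply]; ring)
  calc ∫ x, f x * ψ x ∂ν ≤ ∫ x, v x * (-Δ ψ x + c * ψ x) ∂ν :=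
        integral_mul_le_integral_mul_neg_laplacian_add hU hf hv hψ hψc hψU hψ₀ hfv
    _ = ∫ x in U, v x * (-Δ ψ x + c * ψ x) ∂ν := by
        refine (setIntegral_eq_integral_of_forall_compl_eq_zero fun x hx ↦ ?_).symm
        rw [image_eq_zero_of_notMem_tsupport fun h ↦ hx (hψU h),
          image_eq_zero_of_notMem_tsupport fun h ↦ hx (hψU (tsupport_laplacian_subset ψ h)),
          neg_zero, mul_zero, add_zero, mul_zero]
    _ ≤ ∫ x in U, K * (v x * w x) ∂ν :=
        setIntegral_mono_on hintv.integrableOn (hint.const_mul K) hU.measurableSet fun x hx ↦ by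
          rw [mul_left_comm]
          exact mul_le_mul_of_nonneg_left (hψw x hx) (hv₀ x hx)
    _ = K * ∫ x in U, v x * w x ∂ν := integral_const_mul ..

end Supersolution

section TestFunction

variable {E : Type*} [NormedAddCommGroup E] {U : Set E} {Φ : E → ℝ} {η : ℝ → ℝ} {a R ε : ℝ}
  {x : E}

/-- The test function `h_ε(Φ) η_R^a` on `U`, extended by zero, where `h_ε` is the truncation at
level `ε`. -/
def testFunction (U : Set E) (Φ : E → ℝ) (η : ℝ → ℝ) (a R ε : ℝ) : E → ℝ :=
  U.indicator fun x ↦ truncation ε (Φ x) * η (‖x‖ / R) ^ a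

lemma testFunction_of_mem (hx : x ∈ U) :
    testFunction U Φ η a R ε x = truncation ε (Φ x) * η (‖x‖ / R) ^ a :=
  indicator_of_mem hx _

lemma testFunction_nonneg (hη : IsAnnularProfile η) (hε : 0 < ε) (x : E) :
    0 ≤ testFunction U Φ η a R ε x :=
  indicator_nonneg (fun _ _ ↦ mul_nonneg (truncation_nonneg hε _)
    (Real.rpow_nonneg (hη.nonneg _) _)) x

lemma mem_of_testFunction_ne_zero (hη : IsAnnularProfile η) (ha : a ≠ 0) (hε : 0 < ε) (hR : 0 < R)
    (hx : testFunction U Φ η a R ε x ≠ 0) : x ∈ U ∧ ‖x‖ ∈ Icc R (4 * R) ∧ ε ≤ Φ x := by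
  have hxU := mem_of_indicator_ne_zero hx
  rw [testFunction_of_mem hxU] at hx
  refine ⟨hxU, hη.norm_mem_Icc_of_ne_zero hR fun hzero ↦ ?_, le_of_not_ge fun hle ↦ ?_⟩
  · exact right_ne_zero_of_mul hx (by rw [hzero, Real.zero_rpow ha])
  · exact left_ne_zero_of_mul hx (truncation_of_le hε hle)

end TestFunction

section ConicalEigenfunction

variable {E : Type*} [NormedAddCommGroup E] [InnerProductSpace ℝ E] [FiniteDimensional ℝ E]

/-- The `0`-homogeneous extension `Φ` to `U`, a cone cut off at radius `ρ`, of a positive Dirichlet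
eigenfunction on the sphere with eigenvalue `Λ`. Homogeneity enters only as `inner_gradient_self`,
and the vanishing of `Φ` on the lateral boundary of the cone as `isCompact_superlevel`. -/
structure IsConicalEigenfunction (ρ Λ : ℝ) (U : Set E) (Φ : E → ℝ) : Prop where
  isOpen : IsOpen U
  ne_zero : ∀ x ∈ U, x ≠ 0
  contDiffOn : ContDiffOn ℝ 2 Φ U
  pos : ∀ x ∈ U, 0 < Φ x
  laplacian_eq : ∀ x ∈ U, Δ Φ x = -Λ * (‖x‖ ^ 2)⁻¹ * Φ x
  inner_gradient_self : ∀ x ∈ U, ⟪∇ Φ x, x⟫_ℝ = 0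
  isCompact_superlevel : ∀ ε > 0, ∀ R > ρ, ∀ S, IsCompact {x ∈ U | ‖x‖ ∈ Icc R S ∧ ε ≤ Φ x}

namespace IsConicalEigenfunction

variable {ρ Λ a R ε : ℝ} {U : Set E} {Φ : E → ℝ} {η : ℝ → ℝ} {x : E}
  (hΦ : IsConicalEigenfunction ρ Λ U Φ)
include hΦ

lemma contDiffAt (hx : x ∈ U) : ContDiffAt ℝ 2 Φ x :=
  hΦ.contDiffOn.contDiffAt (hΦ.isOpen.mem_nhds hx)

lemma abs_laplacian_le (hx : x ∈ U) (hR : 0 < R) (hxR : R ≤ ‖x‖) :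
    |Δ Φ x| ≤ |Λ| / R ^ 2 * Φ x := by
  have hpos := (hΦ.pos x hx).le
  rw [hΦ.laplacian_eq x hx, abs_mul, abs_mul, abs_neg, abs_of_nonneg hpos,
    abs_of_nonneg (by positivity : 0 ≤ (‖x‖ ^ 2)⁻¹), div_eq_mul_inv]
  gcongr

variable (hη : IsAnnularProfile η)
include hη

lemma testFunction_le (ha : 2 < a) (hx : x ∈ U) :
    testFunction U Φ η a R ε x ≤ Φ x * η (‖x‖ / R) ^ (a - 2) := by
  have hpos := hΦ.pos x hx
  rw [testFunction_of_mem hx]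
  exact mul_le_mul (truncation_le hpos.le) (hη.rpow_le_rpow (by linarith) (by linarith) _)
    (Real.rpow_nonneg (hη.nonneg _) _) hpos.le

lemma tsupport_testFunction_subset (ha : a ≠ 0) (hε : 0 < ε) (hρ : 0 ≤ ρ) (hR : ρ < R) :
    tsupport (testFunction U Φ η a R ε) ⊆ {x ∈ U | ‖x‖ ∈ Icc R (4 * R) ∧ ε ≤ Φ x} :=
  closure_minimal (fun _ ↦ mem_of_testFunction_ne_zero hη ha hε (hρ.trans_lt hR))
    (hΦ.isCompact_superlevel ε hε R hR _).isClosed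

lemma hasCompactSupport_testFunction (ha : a ≠ 0) (hε : 0 < ε) (hρ : 0 ≤ ρ) (hR : ρ < R) :
    HasCompactSupport (testFunction U Φ η a R ε) :=
  HasCompactSupport.of_support_subset_isCompact (hΦ.isCompact_superlevel ε hε R hR (4 * R))
    ((subset_tsupport _).trans (hΦ.tsupport_testFunction_subset hη ha hε hρ hR))

omit hη in
lemma testFunction_eventuallyEq (hx : x ∈ U) :
    testFunction U Φ η a R ε =ᶠ[𝓝 x] fun y ↦ truncation ε (Φ y) * η (‖y‖ / R) ^ a :=
  eqOn_indicator.eventuallyEq_of_mem (hΦ.isOpen.mem_nhds hx)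

lemma contDiffAt_testFunction (ha : 2 ≤ a) (hx : x ∈ U) :
    ContDiffAt ℝ 2 (testFunction U Φ η a R ε) x :=
  (((contDiff_truncation ε).contDiffAt.comp x (hΦ.contDiffAt hx)).mul
    (hη.contDiffAt_radial_rpow ha (hΦ.ne_zero x hx))).congr_of_eventuallyEq
    (hΦ.testFunction_eventuallyEq hx)

lemma contDiff_testFunction (ha : 2 ≤ a) (hε : 0 < ε) (hρ : 0 ≤ ρ) (hR : ρ < R) :
    ContDiff ℝ 2 (testFunction U Φ η a R ε) := by
  rw [← contMDiff_iff_contDiff]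
  exact contMDiff_of_tsupport fun x hx ↦ (hΦ.contDiffAt_testFunction hη ha
    (hΦ.tsupport_testFunction_subset hη (by linarith) hε hρ hR hx).1).contMDiffAt

lemma inner_gradient_truncation_gradient_radial_rpow (ha : 2 ≤ a) (hx : x ∈ U) :
    ⟪∇ (fun y ↦ truncation ε (Φ y)) x, ∇ (fun y : E ↦ η (‖y‖ / R) ^ a) x⟫_ℝ = 0 := by
  have hprofile : DifferentiableAt ℝ (fun r ↦ η (r / R) ^ a) ‖x‖ :=
    ((hη.contDiff_rpow ha).differentiable two_ne_zero).comp (differentiable_id.div_const R) ‖x‖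
  rw [gradient_comp ((contDiff_truncation ε).differentiable two_ne_zero _)
    ((hΦ.contDiffAt hx).differentiableAt two_ne_zero),
    gradient_comp_norm (h := fun r ↦ η (r / R) ^ a) hprofile (hΦ.ne_zero x hx),
    real_inner_smul_left, real_inner_smul_right, hΦ.inner_gradient_self x hx, mul_zero, mul_zero]

lemma laplacian_testFunction (ha : 2 ≤ a) (hx : x ∈ U) :
    Δ (testFunction U Φ η a R ε) x =
      truncation ε (Φ x) * Δ (fun y : E ↦ η (‖y‖ / R) ^ a) x +
        η (‖x‖ / R) ^ a * Δ (fun y ↦ truncation ε (Φ y)) x := by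
  rw [(laplacian_congr_nhds (hΦ.testFunction_eventuallyEq hx)).eq_of_nhds,
    laplacian_mul (f := fun y ↦ truncation ε (Φ y))
      ((contDiff_truncation ε).contDiffAt.comp x (hΦ.contDiffAt hx))
      (hη.contDiffAt_radial_rpow ha (hΦ.ne_zero x hx)),
    hΦ.inner_gradient_truncation_gradient_radial_rpow hη ha hx, mul_zero, add_zero]

omit hη in
lemma neg_laplacian_truncation_le (hε : 0 ≤ ε) (hx : x ∈ U) :
    -Δ (fun y ↦ truncation ε (Φ y)) x ≤ |Δ Φ x| := by
  rw [laplacian_comp (contDiff_truncation ε).contDiffAt (hΦ.contDiffAt hx)]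
  have hconvex : 0 ≤ deriv (deriv (truncation ε)) (Φ x) * ‖∇ Φ x‖ ^ 2 :=
    mul_nonneg (deriv_deriv_truncation_nonneg hε _) (sq_nonneg _)
  have hderiv : -(deriv (truncation ε) (Φ x) * Δ Φ x) ≤ |Δ Φ x| := by
    refine (neg_le_abs _).trans ?_
    rw [abs_mul, abs_of_nonneg (deriv_truncation_nonneg ε _)]
    exact mul_le_of_le_one_left (abs_nonneg _) (deriv_truncation_le_one ε _)
  linarith

theorem neg_laplacian_testFunction_le {M : ℝ} (ha : 2 < a)
    (hM : |Δ (fun y : E ↦ η (‖y‖ / R) ^ a) x| ≤ M / R ^ 2 * η (‖x‖ / R) ^ (a - 2)) (hε : 0 < ε)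
    (hR : 0 < R) (hx : x ∈ U) :
    -Δ (testFunction U Φ η a R ε) x ≤ (|Λ| + M) / R ^ 2 * (Φ x * η (‖x‖ / R) ^ (a - 2)) := by
  have hpos := (hΦ.pos x hx).le
  have hη₀ (b : ℝ) : 0 ≤ η (‖x‖ / R) ^ b := Real.rpow_nonneg (hη.nonneg _) _
  have hradial : truncation ε (Φ x) * -Δ (fun y : E ↦ η (‖y‖ / R) ^ a) x ≤
      Φ x * (M / R ^ 2 * η (‖x‖ / R) ^ (a - 2)) :=
    (mul_le_mul_of_nonneg_left (neg_le_abs _) (truncation_nonneg hε _)).trans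
      (mul_le_mul (truncation_le hpos) hM (abs_nonneg _) hpos)
  have hangular : η (‖x‖ / R) ^ a * -Δ (fun y ↦ truncation ε (Φ y)) x ≤
      η (‖x‖ / R) ^ (a - 2) * (|Λ| / R ^ 2 * Φ x) := by
    rcases eq_or_ne (η (‖x‖ / R)) 0 with hzero | hne
    · rw [hzero, Real.zero_rpow (by linarith), Real.zero_rpow (by linarith), zero_mul, zero_mul]
    · have hΔ := (hΦ.neg_laplacian_truncation_le hε.le hx).trans
        (hΦ.abs_laplacian_le hx hR (hη.norm_mem_Icc_of_ne_zero hR hne).1)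
      exact (mul_le_mul_of_nonneg_left hΔ (hη₀ a)).trans (mul_le_mul_of_nonneg_right
        (hη.rpow_le_rpow (by linarith) (by linarith) _) (by positivity))
  rw [hΦ.laplacian_testFunction hη ha.le hx]
  calc _ ≤ Φ x * (M / R ^ 2 * η (‖x‖ / R) ^ (a - 2)) +
          η (‖x‖ / R) ^ (a - 2) * (|Λ| / R ^ 2 * Φ x) := by linarith
    _ = (|Λ| + M) / R ^ 2 * (Φ x * η (‖x‖ / R) ^ (a - 2)) := by ring

end IsConicalEigenfunction

end ConicalEigenfunction

section WeightedEstimate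

variable {E : Type*} [NormedAddCommGroup E] [InnerProductSpace ℝ E] [FiniteDimensional ℝ E]
  {u : E → ℝ} {x : E} {q κ μ m R : ℝ}

lemma mul_rpow_sub_le_neg_laplacian_rpow_add (hu : ContDiffAt ℝ 2 u x) (hpos : 0 < u x)
    (hm₀ : 0 ≤ m) (hm₁ : m ≤ 1) (hR : 0 < R) (hxR : R ≤ ‖x‖)
    (hineq : κ * u x ^ q ≤ -Δ u x - μ * (‖x‖ ^ 2)⁻¹ * u x) :
    (1 - m) * κ * u x ^ (q - m) ≤
      -Δ (fun y ↦ u y ^ (1 - m)) x + (1 - m) * |μ| / R ^ 2 * u x ^ (1 - m) := by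
  have hpotential : -(μ * (‖x‖ ^ 2)⁻¹ * u x) ≤ |μ| * (R ^ 2)⁻¹ * u x := by
    rw [← neg_mul, ← neg_mul]
    gcongr
    exact neg_le_abs μ
  rw [← sub_le_iff_le_add]
  calc (1 - m) * κ * u x ^ (q - m) - (1 - m) * |μ| / R ^ 2 * u x ^ (1 - m)
      = (1 - m) * u x ^ (-m) * (κ * u x ^ q - |μ| * (R ^ 2)⁻¹ * u x) := by
        rw [sub_eq_add_neg q, sub_eq_add_neg 1 m, Real.rpow_add hpos, Real.rpow_add hpos,
          Real.rpow_one]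
        ring
    _ ≤ (1 - m) * u x ^ (-m) * -Δ u x := by
        have := sub_nonneg.mpr hm₁
        gcongr
        linarith
    _ ≤ -Δ (fun y ↦ u y ^ (1 - m)) x :=
        one_sub_mul_rpow_neg_mul_le_neg_laplacian_rpow hu hpos hm₀ hm₁

variable [MeasurableSpace E] [BorelSpace E] {ν : Measure E} [ν.IsAddHaarMeasure]
  {ρ Λ M a ε : ℝ} {U : Set E} {Φ : E → ℝ} {η : ℝ → ℝ}

namespace IsConicalEigenfunction

variable (hΦ : IsConicalEigenfunction ρ Λ U Φ) (hη : IsAnnularProfile η)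
  (hρ : 0 ≤ ρ) (hR : ρ < R) (ha : 2 < a) (hm₀ : 0 ≤ m) (hm₁ : m ≤ 1)
  (hM : ∀ x : E, x ≠ 0 →
    |Δ (fun y : E ↦ η (‖y‖ / R) ^ a) x| ≤ M / R ^ 2 * η (‖x‖ / R) ^ (a - 2))
  (hu : ContDiffOn ℝ 2 u U) (hpos : ∀ x ∈ U, 0 < u x)
  (hineq : ∀ x ∈ U, ‖x‖ ∈ Icc R (4 * R) → κ * u x ^ q ≤ -Δ u x - μ * (‖x‖ ^ 2)⁻¹ * u x)
  (hint : IntegrableOn (fun x ↦ u x ^ (1 - m) * (Φ x * η (‖x‖ / R) ^ (a - 2))) U ν)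
include hΦ hη hρ hR ha hm₀ hm₁ hM hu hpos hineq hint

lemma integral_mul_testFunction_le (hε : 0 < ε) :
    ∫ x, (1 - m) * κ * u x ^ (q - m) * testFunction U Φ η a R ε x ∂ν ≤
      ((1 - m) * |μ| + |Λ| + M) / R ^ 2 *
        ∫ x in U, u x ^ (1 - m) * (Φ x * η (‖x‖ / R) ^ (a - 2)) ∂ν := by
  have hR₀ : 0 < R := hρ.trans_lt hR
  have hrpow (b : ℝ) : ContDiffOn ℝ 2 (fun x ↦ u x ^ b) U :=
    hu.rpow_const_of_ne fun x hx ↦ (hpos x hx).ne'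
  refine integral_mul_le_setIntegral_mul_of_le_neg_laplacian_add hΦ.isOpen
    ((hrpow _).continuousOn.const_mul _) (hrpow _) (c := (1 - m) * |μ| / R ^ 2)
    (hΦ.contDiff_testFunction hη ha.le hε hρ hR)
    (hΦ.hasCompactSupport_testFunction hη (by linarith) hε hρ hR)
    ((hΦ.tsupport_testFunction_subset hη (by linarith) hε hρ hR).trans inter_subset_left)
    (testFunction_nonneg hη hε) (fun x hx ↦ ?_)
    (fun x hx ↦ Real.rpow_nonneg (hpos x hx).le _) (fun x hx ↦ ?_) hint
  · obtain ⟨hxU, hxR, -⟩ := mem_of_testFunction_ne_zero hη (by linarith) hε hR₀ hx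
    exact mul_rpow_sub_le_neg_laplacian_rpow_add (hu.contDiffAt (hΦ.isOpen.mem_nhds hxU))
      (hpos x hxU) hm₀ hm₁ hR₀ hxR.1 (hineq x hxU hxR)
  · have hΔ := hΦ.neg_laplacian_testFunction_le hη ha (hM x (hΦ.ne_zero x hx)) hε hR₀ hx
    have hψ : (1 - m) * |μ| / R ^ 2 * testFunction U Φ η a R ε x ≤
        (1 - m) * |μ| / R ^ 2 * (Φ x * η (‖x‖ / R) ^ (a - 2)) := by
      have := sub_nonneg.mpr hm₁
      gcongr
      exact hΦ.testFunction_le hη ha hx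
    refine (add_le_add hΔ hψ).trans_eq ?_
    ring

lemma lintegral_mul_rpow_le (hκ : 0 ≤ κ) :
    ∫⁻ x in U, .ofReal ((1 - m) * κ * u x ^ (q - m) * (Φ x * η (‖x‖ / R) ^ a)) ∂ν ≤
      .ofReal (((1 - m) * |μ| + |Λ| + M) / R ^ 2 *
        ∫ x in U, u x ^ (1 - m) * (Φ x * η (‖x‖ / R) ^ (a - 2)) ∂ν) := by
  have hrpow (b : ℝ) : ContinuousOn (fun x ↦ u x ^ b) U :=
    hu.continuousOn.rpow_const fun x hx ↦ .inl (hpos x hx).ne'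
  have hcont (ε : ℝ) : ContinuousOn (testFunction U Φ η a R ε) U := fun x hx ↦
    (hΦ.contDiffAt_testFunction hη ha.le hx).continuousAt.continuousWithinAt
  refine lintegral_le_of_tendsto (l := 𝓝[>] (0 : ℝ))
    (f := fun ε x ↦ .ofReal ((1 - m) * κ * u x ^ (q - m) * testFunction U Φ η a R ε x))
    (fun ε ↦ ?_) ?_ ?_
  · exact ((((hrpow _).const_mul _).mul (hcont ε)).aemeasurable
      hΦ.isOpen.measurableSet).ennreal_ofReal
  · filter_upwards [ae_restrict_mem hΦ.isOpen.measurableSet] with x hx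
    simp only [testFunction_of_mem hx]
    exact ENNReal.tendsto_ofReal
      (((tendsto_truncation (hΦ.pos x hx).le).mul_const _).const_mul _)
  · filter_upwards [self_mem_nhdsWithin] with ε (hε : 0 < ε)
    have hint' : Integrable (fun x ↦ (1 - m) * κ * u x ^ (q - m) * testFunction U Φ η a R ε x) ν :=
      integrable_mul_of_tsupport_subset hΦ.isOpen ((hrpow _).const_mul _)
        (hΦ.contDiff_testFunction hη ha.le hε hρ hR).continuous
        (hΦ.hasCompactSupport_testFunction hη (by linarith) hε hρ hR)
        ((hΦ.tsupport_testFunction_subset hη (by linarith) hε hρ hR).trans inter_subset_left)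
    rw [← ofReal_integral_eq_lintegral_ofReal hint'.integrableOn]
    · rw [setIntegral_eq_integral_of_forall_compl_eq_zero fun x hx ↦ by
        rw [testFunction, indicator_of_notMem hx, mul_zero]]
      exact ENNReal.ofReal_le_ofReal (hΦ.integral_mul_testFunction_le hη hρ hR ha hm₀ hm₁ hM hu
        hpos hineq hint hε)
    · filter_upwards [ae_restrict_mem hΦ.isOpen.measurableSet] with x hx
      have := sub_nonneg.mpr hm₁
      have := hpos x hx
      have := testFunction_nonneg (U := U) (Φ := Φ) (a := a) (R := R) hη hε x
      simp only [Pi.zero_apply]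
      positivity

end IsConicalEigenfunction

namespace IsConicalEigenfunction

variable {p c : ℝ}

omit [ν.IsAddHaarMeasure] in
lemma sq_lintegral_enorm_rpow_mul_le (hΦ : IsConicalEigenfunction ρ Λ U Φ)
    (hη : IsAnnularProfile η) (ha : 2 < a) (hR : 0 < R) (hu : ContinuousOn u U)
    (hpos : ∀ x ∈ U, 0 < u x) :
    (∫⁻ x in U, ‖u x ^ ((p + q - m) / 2) * (Φ x ^ (1 / 2 : ℝ) * η (‖x‖ / R) ^ (a / 2))‖ₑ ∂ν) ^ 2 ≤
      (∫⁻ x in {x ∈ U | ‖x‖ ∈ Icc R (4 * R)}, .ofReal (u x ^ p) ∂ν) *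
        ∫⁻ x in U, .ofReal (u x ^ (q - m) * (Φ x * η (‖x‖ / R) ^ a)) ∂ν := by
  have hannulus : MeasurableSet {x : E | ‖x‖ ∈ Icc R (4 * R)} := measurable_norm measurableSet_Icc
  have hrpow (b : ℝ) : ContinuousOn (fun x ↦ u x ^ b) U :=
    hu.rpow_const fun x hx ↦ .inl (hpos x hx).ne'
  have hradial : ContinuousOn (fun x : E ↦ η (‖x‖ / R) ^ a) U := fun x hx ↦
    (hη.contDiffAt_radial_rpow ha.le (hΦ.ne_zero x hx)).continuousAt.continuousWithinAt
  rw [setLIntegral_congr_fun hΦ.isOpen.measurableSet fun x hx ↦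
    hη.enorm_rpow_mul_eq_indicator_rpow_mul (by linarith) hR (hpos x hx) (hΦ.pos x hx).le]
  refine (sq_lintegral_rpow_half_mul_le ?_ ?_).trans_eq ?_
  · exact (((hrpow p).aemeasurable hΦ.isOpen.measurableSet).ennreal_ofReal).indicator hannulus
  · exact (((hrpow _).mul (hΦ.contDiffOn.continuousOn.mul hradial)).aemeasurable
      hΦ.isOpen.measurableSet).ennreal_ofReal
  · rw [lintegral_indicator hannulus, Measure.restrict_restrict hannulus, inter_comm]
    rfl

theorem mul_sq_integral_rpow_le (hΦ : IsConicalEigenfunction ρ Λ U Φ) (hη : IsAnnularProfile η)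
    (hρ : 0 ≤ ρ) (hR : ρ < R) (ha : 2 < a) (hm₀ : 0 ≤ m) (hm₁ : m ≤ 1) (hM₀ : 0 ≤ M)
    (hM : ∀ x : E, x ≠ 0 →
      |Δ (fun y : E ↦ η (‖y‖ / R) ^ a) x| ≤ M / R ^ 2 * η (‖x‖ / R) ^ (a - 2))
    (hu : ContDiffOn ℝ 2 u U) (hpos : ∀ x ∈ U, 0 < u x) (hc : 0 ≤ c)
    (hfin : ∫⁻ x in {x ∈ U | ‖x‖ ∈ Icc R (4 * R)}, .ofReal (u x ^ p) ∂ν ≠ ⊤)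
    (hineq : ∀ x ∈ U, ‖x‖ ∈ Icc R (4 * R) →
      c * (∫⁻ y in {y ∈ U | ‖y‖ ∈ Icc R (4 * R)}, .ofReal (u y ^ p) ∂ν).toReal * u x ^ q ≤
        -Δ u x - μ * (‖x‖ ^ 2)⁻¹ * u x)
    (hint : IntegrableOn (fun x ↦ u x ^ (1 - m) * (Φ x * η (‖x‖ / R) ^ (a - 2))) U ν) :
    (1 - m) * c *
        (∫ x in U, u x ^ ((p + q - m) / 2) * (Φ x ^ (1 / 2 : ℝ) * η (‖x‖ / R) ^ (a / 2)) ∂ν) ^ 2 ≤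
      ((1 - m) * |μ| + |Λ| + M) / R ^ 2 *
        ∫ x in U, u x ^ (1 - m) * (Φ x * η (‖x‖ / R) ^ (a - 2)) ∂ν := by
  set B := ∫⁻ x in {x ∈ U | ‖x‖ ∈ Icc R (4 * R)}, .ofReal (u x ^ p) ∂ν
  set F : E → ℝ := fun x ↦ u x ^ ((p + q - m) / 2) * (Φ x ^ (1 / 2 : ℝ) * η (‖x‖ / R) ^ (a / 2))
  have := sub_nonneg.mpr hm₁
  have hrhs : 0 ≤ ∫ x in U, u x ^ (1 - m) * (Φ x * η (‖x‖ / R) ^ (a - 2)) ∂ν :=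
    setIntegral_nonneg hΦ.isOpen.measurableSet fun x hx ↦ mul_nonneg
      (Real.rpow_nonneg (hpos x hx).le _)
      (mul_nonneg (hΦ.pos x hx).le (Real.rpow_nonneg (hη.nonneg _) _))
  have hB : .ofReal ((1 - m) * c) * B = .ofReal ((1 - m) * (c * B.toReal)) := by
    rw [← mul_assoc, ENNReal.ofReal_mul (p := (1 - m) * c) (by positivity),
      ENNReal.ofReal_toReal hfin]
  rw [← ENNReal.ofReal_le_ofReal_iff (by positivity)]
  calc ENNReal.ofReal ((1 - m) * c * (∫ x in U, F x ∂ν) ^ 2)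
      = .ofReal ((1 - m) * c) * ‖∫ x in U, F x ∂ν‖ₑ ^ 2 := by
        rw [ENNReal.ofReal_mul (by positivity), ← enorm_pow, Real.enorm_of_nonneg (sq_nonneg _)]
    _ ≤ .ofReal ((1 - m) * c) * (∫⁻ x in U, ‖F x‖ₑ ∂ν) ^ 2 := by
        gcongr
        exact enorm_integral_le_lintegral_enorm F
    _ ≤ .ofReal ((1 - m) * c) *
          (B * ∫⁻ x in U, .ofReal (u x ^ (q - m) * (Φ x * η (‖x‖ / R) ^ a)) ∂ν) := by
        gcongr
        exact hΦ.sq_lintegral_enorm_rpow_mul_le hη ha (hρ.trans_lt hR) hu.continuousOn hpos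
    _ = ∫⁻ x in U,
          .ofReal ((1 - m) * (c * B.toReal) * u x ^ (q - m) * (Φ x * η (‖x‖ / R) ^ a)) ∂ν := by
        rw [← mul_assoc, hB, ← lintegral_const_mul' _ _ ENNReal.ofReal_ne_top]
        refine lintegral_congr fun x ↦ ?_
        rw [← ENNReal.ofReal_mul (by positivity), ← mul_assoc _ (u x ^ (q - m))]
    _ ≤ _ := hΦ.lintegral_mul_rpow_le hη hρ hR ha hm₀ hm₁ hM hu hpos hineq hint (by positivity)

end IsConicalEigenfunction

end WeightedEstimate

section Cone

variable {N : ℕ} {Ω : Set (Euc N)} {φ : Euc N → ℝ} {ρ R S ε : ℝ} {x : Euc N}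

lemma lap_eq_laplacian (u : Euc N → ℝ) : lap N u = Δ u := by
  funext x
  simp only [lap, laplacian_eq_iteratedFDeriv_orthonormalBasis u (EuclideanSpace.basisFun _ ℝ),
    EuclideanSpace.basisFun_apply]

lemma radialProjection_smul {t : ℝ} (ht : 0 < t) (x : Euc N) : ‖t • x‖⁻¹ • t • x = ‖x‖⁻¹ • x := by
  rw [norm_smul, Real.norm_of_nonneg ht.le, smul_smul, mul_inv_rev, mul_assoc,
    inv_mul_cancel₀ ht.ne', mul_one]

lemma continuousOn_radialProjection : ContinuousOn (fun x : Euc N ↦ ‖x‖⁻¹ • x) {0}ᶜ :=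
  (continuous_norm.continuousOn.inv₀ fun _ hx ↦ norm_ne_zero_iff.mpr hx).smul continuousOn_id

lemma IsConeDomain.isOpen_cone (hΩ : IsConeDomain N Ω) : IsOpen (cone N Ω) := by
  obtain ⟨V, hV, hVΩ⟩ := isOpen_induced_iff.mp hΩ.2.2
  have hcone : cone N Ω = {0}ᶜ ∩ (fun x : Euc N ↦ ‖x‖⁻¹ • x) ⁻¹' V := by
    ext x
    refine and_congr_right fun hx ↦ ?_
    have hsphere : ‖x‖⁻¹ • x ∈ Metric.sphere (0 : Euc N) 1 :=
      mem_sphere_zero_iff_norm.mpr (norm_smul_inv_norm (𝕜 := ℝ) hx)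
    exact (Set.ext_iff.mp hVΩ ⟨_, hsphere⟩).symm
  rw [hcone]
  exact continuousOn_radialProjection.isOpen_inter_preimage isOpen_compl_singleton hV

lemma coneGT_subset_cone (hρ : 0 ≤ ρ) : coneGT N ρ Ω ⊆ cone N Ω :=
  fun _ hx ↦ ⟨norm_pos_iff.mp (hρ.trans_lt hx.1), hx.2⟩

lemma isOpen_coneGT (hΩ : IsOpen (cone N Ω)) (hρ : 0 ≤ ρ) : IsOpen (coneGT N ρ Ω) := by
  have hcut : coneGT N ρ Ω = {x | ρ < ‖x‖} ∩ cone N Ω :=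
    Subset.antisymm (fun x hx ↦ ⟨hx.1, coneGT_subset_cone hρ hx⟩) fun x hx ↦ ⟨hx.1, hx.2.2⟩
  rw [hcut]
  exact (isOpen_lt continuous_const continuous_norm).inter hΩ

namespace DirichletEigenpair

variable {lam1 : ℝ} (hφ : DirichletEigenpair N Ω lam1 φ)
include hφ

lemma isCompact_superlevel (hρ : 0 ≤ ρ) (hε : 0 < ε) (hR : ρ < R) :
    IsCompact {x ∈ coneGT N ρ Ω | ‖x‖ ∈ Icc R S ∧ ε ≤ φ (‖x‖⁻¹ • x)} := by
  set A : Set (Euc N) := {x | ‖x‖ ∈ Icc R S}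
  set B : Set (Euc N) := A ∩ (fun x ↦ ‖x‖⁻¹ • x) ⁻¹' closure Ω
  have hproj : ContinuousOn (fun x : Euc N ↦ ‖x‖⁻¹ • x) A :=
    continuousOn_radialProjection.mono fun x hx ↦
      norm_pos_iff.mp ((hρ.trans_lt hR).trans_le hx.1)
  have hB : IsClosed B := hproj.preimage_isClosed_of_isClosed
    (isClosed_Icc.preimage continuous_norm) isClosed_closure
  have hlevel : {x ∈ coneGT N ρ Ω | ‖x‖ ∈ Icc R S ∧ ε ≤ φ (‖x‖⁻¹ • x)} =
      B ∩ (fun x ↦ φ (‖x‖⁻¹ • x)) ⁻¹' Ici ε := by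
    refine Subset.antisymm (fun x ⟨hxU, hxA, hxε⟩ ↦ ⟨⟨hxA, subset_closure hxU.2⟩, hxε⟩) ?_
    rintro x ⟨⟨hxA, hxΩ⟩, hxε⟩
    refine ⟨⟨hR.trans_le hxA.1, by_contra fun hx ↦ ?_⟩, hxA, hxε⟩
    rw [mem_preimage, mem_Ici, hφ.bdryZero _ ⟨hxΩ, hx⟩] at hxε
    exact hε.not_ge hxε
  rw [hlevel]
  refine Metric.isCompact_of_isClosed_isBounded ?_ ?_
  · exact (hφ.contOn.comp (hproj.mono inter_subset_left) fun x hx ↦ hx.2)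
      |>.preimage_isClosed_of_isClosed hB isClosed_Ici
  · exact (Metric.isBounded_closedBall (x := (0 : Euc N)) (r := S)).subset fun x hx ↦
      mem_closedBall_zero_iff.mpr hx.1.1.2

lemma isConicalEigenfunction (hΩ : IsOpen (cone N Ω)) (hρ : 0 ≤ ρ) :
    IsConicalEigenfunction ρ lam1 (coneGT N ρ Ω) fun x ↦ φ (‖x‖⁻¹ • x) where
  isOpen := isOpen_coneGT hΩ hρ
  ne_zero _ hx := (coneGT_subset_cone hρ hx).1
  contDiffOn := hφ.smoothExt.mono (coneGT_subset_cone hρ)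
  pos _ hx := hφ.pos _ hx.2
  laplacian_eq x hx := by
    rw [← lap_eq_laplacian, hφ.eigen x (coneGT_subset_cone hρ hx), Real.rpow_neg (norm_nonneg x),
      Real.rpow_two]
  inner_gradient_self x hx := by
    have hxΩ := coneGT_subset_cone hρ hx
    refine inner_gradient_self_of_eventually_smul_eq
      ((hφ.smoothExt.contDiffAt (hΩ.mem_nhds hxΩ)).differentiableAt two_ne_zero) ?_
    filter_upwards [lt_mem_nhds zero_lt_one] with t ht
    rw [radialProjection_smul ht]
  isCompact_superlevel _ hε _ hR _ := hφ.isCompact_superlevel hρ hε hR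

end DirichletEigenpair

section APriori

variable {N : ℕ} {Ω : Set (Euc N)} {φ u : Euc N → ℝ} {η : ℝ → ℝ} {α m p q ρ μ lam1 lam R : ℝ}
  {x : Euc N}

lemma integrableOn_rpow_mul_radial_rpow (hΩ : IsOpen (cone N Ω))
    (hφ : DirichletEigenpair N Ω lam1 φ) (hη : IsAnnularProfile η) (hlam : 2 < lam) (hρ : 0 ≤ ρ)
    (hR : 0 < R) (hm : m ≤ 1) (hu : ContinuousOn u (closure (coneGT N ρ Ω)))
    (hpos : ∀ x ∈ coneGT N ρ Ω, 0 < u x) :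
    IntegrableOn (fun x ↦ u x ^ (1 - m) * (φ (‖x‖⁻¹ • x) * η (‖x‖ / R) ^ (lam - 2)))
      (coneGT N ρ Ω) := by
  set U := coneGT N ρ Ω
  have hU : MeasurableSet U := (isOpen_coneGT hΩ hρ).measurableSet
  have hball : MeasurableSet (U ∩ Metric.closedBall 0 (4 * R)) := hU.inter measurableSet_closedBall
  obtain ⟨V, hV⟩ := ((isCompact_closedBall (0 : Euc N) (4 * R)).inter_left
    isClosed_closure).exists_bound_of_continuousOn (hu.mono inter_subset_left)
  have hcont : ContinuousOn
      (fun x ↦ u x ^ (1 - m) * (φ (‖x‖⁻¹ • x) * η (‖x‖ / R) ^ (lam - 2))) U :=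
    ((hu.mono subset_closure).rpow_const fun x hx ↦ .inl (hpos x hx).ne').mul
      ((hφ.smoothExt.continuousOn.mono (coneGT_subset_cone hρ)).mul
        ((hη.contDiff.continuous.comp (continuous_norm.div_const R)).rpow_const
          fun _ ↦ .inr (by linarith)).continuousOn)
  refine IntegrableOn.of_forall_sdiff_eq_zero (s := U ∩ Metric.closedBall 0 (4 * R)) ?_ hU ?_
  · refine .of_bound (C := V ^ (1 - m)) ((measure_mono inter_subset_right).trans_lt
      measure_closedBall_lt_top) ((hcont.mono inter_subset_left).aestronglyMeasurable hball) ?_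
    filter_upwards [ae_restrict_mem hball] with x hx
    have hux := (hpos x hx.1).le
    have huV : u x ≤ V := (le_abs_self _).trans (hV x ⟨subset_closure hx.1, hx.2⟩)
    have hφ₀ := (hφ.pos _ hx.1.2).le
    have hη₀ := Real.rpow_nonneg (hη.nonneg (‖x‖ / R)) (lam - 2)
    rw [Real.norm_of_nonneg (by positivity)]
    calc _ ≤ u x ^ (1 - m) := mul_le_of_le_one_right (by positivity)
          (mul_le_one₀ (hφ.le_one _ (subset_closure hx.1.2)) hη₀
            (Real.rpow_le_one (hη.nonneg _) (hη.le_one _) (by linarith)))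
      _ ≤ V ^ (1 - m) := Real.rpow_le_rpow hux huV (by linarith)
  · intro x hx
    have hη₀ : η (‖x‖ / R) = 0 := by
      by_contra hne
      exact hx.2 ⟨hx.1, mem_closedBall_zero_iff.mpr (hη.norm_mem_Icc_of_ne_zero hR hne).2⟩
    rw [hη₀, Real.zero_rpow (by linarith), mul_zero, mul_zero]

lemma ofReal_rpow_neg_mul_lintegral_le_rieszConv (hΩ : IsOpen (cone N Ω)) (hρ : 0 ≤ ρ)
    (hα : 0 ≤ α) (hR : 0 < R) (hpos : ∀ x ∈ coneGT N ρ Ω, 0 < u x) (hx₀ : x ≠ 0)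
    (hx : ‖x‖ ≤ 4 * R) :
    .ofReal ((8 * R) ^ (-α)) *
        ∫⁻ y in {y ∈ coneGT N ρ Ω | ‖y‖ ∈ Icc R (4 * R)}, .ofReal (u y ^ p) ≤
      rieszConv N α ρ Ω (fun y ↦ u y ^ p) x := by
  have hannulus : MeasurableSet {y ∈ coneGT N ρ Ω | ‖y‖ ∈ Icc R (4 * R)} :=
    (isOpen_coneGT hΩ hρ).measurableSet.inter (measurable_norm measurableSet_Icc)
  have : Nontrivial (Euc N) := nontrivial_of_ne x 0 hx₀
  rw [← lintegral_const_mul' _ _ ENNReal.ofReal_ne_top]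
  refine le_trans (lintegral_mono_ae ?_) (lintegral_mono_set fun _ hy ↦ hy.1)
  filter_upwards [ae_restrict_mem hannulus, ae_restrict_of_ae (Measure.ae_ne volume x)]
    with y hy hyx
  rw [← ENNReal.ofReal_mul (by positivity), mul_comm]
  have hdist : ‖x - y‖ ≤ 8 * R := by linarith [norm_sub_le x y, hy.2.2]
  exact ENNReal.ofReal_le_ofReal (mul_le_mul_of_nonneg_left
    (Real.rpow_le_rpow_of_nonpos (norm_sub_pos_iff.mpr hyx.symm) hdist (neg_nonpos.mpr hα))
    (Real.rpow_nonneg (hpos y hy.1).le _))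

lemma IsPosSolE.lintegral_annulus_ne_top (hu : IsPosSolE N ρ μ α p q Ω u)
    (hΩ : IsOpen (cone N Ω)) (hρ : 0 ≤ ρ) (hα : 0 ≤ α) (hR : 0 < R) :
    ∫⁻ y in {y ∈ coneGT N ρ Ω | ‖y‖ ∈ Icc R (4 * R)}, .ofReal (u y ^ p) ≠ ⊤ := by
  obtain ⟨-, -, hpos, hfin, -⟩ := hu
  rcases eq_empty_or_nonempty {y ∈ coneGT N ρ Ω | ‖y‖ ∈ Icc R (4 * R)} with
    hempty | ⟨x, hxU, hxR⟩
  · rw [hempty, Measure.restrict_empty, lintegral_zero_measure]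
    exact ENNReal.zero_ne_top
  intro htop
  have hle := ofReal_rpow_neg_mul_lintegral_le_rieszConv (p := p) hΩ hρ hα hR hpos
    (coneGT_subset_cone hρ hxU).1 hxR.2
  rw [htop, ENNReal.mul_top (ENNReal.ofReal_pos.mpr (by positivity)).ne'] at hle
  exact hle.not_gt (hfin x hxU)

lemma IsPosSolE.annulus_mul_rpow_le (hu : IsPosSolE N ρ μ α p q Ω u) (hΩ : IsOpen (cone N Ω))
    (hρ : 0 ≤ ρ) (hα : 0 ≤ α) (hR : 0 < R) (hx : x ∈ coneGT N ρ Ω) (hxR : ‖x‖ ≤ 4 * R) :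
    (8 * R) ^ (-α) *
        (∫⁻ y in {y ∈ coneGT N ρ Ω | ‖y‖ ∈ Icc R (4 * R)}, .ofReal (u y ^ p)).toReal * u x ^ q ≤
      -Δ u x - μ * (‖x‖ ^ 2)⁻¹ * u x := by
  obtain ⟨-, -, hpos, hfin, hineq⟩ := hu
  have hle := ENNReal.toReal_mono (hfin x hx).ne (ofReal_rpow_neg_mul_lintegral_le_rieszConv
    hΩ hρ hα hR hpos (coneGT_subset_cone hρ hx).1 hxR)
  rw [ENNReal.toReal_mul, ENNReal.toReal_ofReal (by positivity)] at hle
  rw [← lap_eq_laplacian, ← Real.rpow_two, ← Real.rpow_neg (norm_nonneg x)]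
  exact (mul_le_mul_of_nonneg_right hle (Real.rpow_nonneg (hpos x hx).le q)).trans (hineq x hx)

lemma le_mul_rpow_mul_of_mul_rpow_neg_mul_le {δ K J D : ℝ} (hδ : 0 < δ) (hR : 0 < R)
    (h : δ * (8 * R) ^ (-α) * J ≤ K / R ^ 2 * D) :
    J ≤ K * 8 ^ α / δ * R ^ (α - 2) * D := by
  have hpos : 0 < δ * (8 * R) ^ (-α) := by positivity
  refine le_of_mul_le_mul_left (h.trans_eq ?_) hpos
  rw [Real.mul_rpow (by norm_num) hR.le, Real.rpow_sub hR, Real.rpow_neg (by norm_num),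
    Real.rpow_neg hR.le, Real.rpow_two]
  field_simp

theorem a_priori_estimate_general (hΩ : IsOpen (cone N Ω)) (hφ : DirichletEigenpair N Ω lam1 φ)
    (hα : 0 ≤ α) (hρ : 0 ≤ ρ) (hu : IsPosSolE N ρ μ α p q Ω u) (hη : IsAnnularProfile η)
    (hlam : 2 < lam) (hm₀ : 0 ≤ m) (hm₁ : m < 1) :
    ∃ C > 0, ∀ R > ρ,
      (∫ x in coneGT N ρ Ω,
          u x ^ ((p + q - m) / 2) * φ (‖x‖⁻¹ • x) ^ (1 / 2 : ℝ) * η (‖x‖ / R) ^ (lam / 2)) ^ 2 ≤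
        C * R ^ (α - 2) *
          ∫ x in coneGT N ρ Ω, u x ^ (1 - m) * φ (‖x‖⁻¹ • x) * η (‖x‖ / R) ^ (lam - 2) := by
  obtain ⟨M, hM₀, hM⟩ := hη.exists_abs_laplacian_radial_rpow_le (Euc N) hlam
  have hδ : 0 < 1 - m := sub_pos.mpr hm₁
  refine ⟨((1 - m) * |μ| + |lam1| + M) * 8 ^ α / (1 - m), by positivity, fun R hR ↦ ?_⟩
  have hR₀ : 0 < R := hρ.trans_lt hR
  have hfin := hu.lintegral_annulus_ne_top hΩ hρ hα hR₀
  have hineq := fun x hx (hxR : ‖x‖ ∈ Icc R (4 * R)) ↦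
    hu.annulus_mul_rpow_le hΩ hρ hα hR₀ hx hxR.2
  obtain ⟨hu₂, hu_cont, hpos, -, -⟩ := hu
  have hint := integrableOn_rpow_mul_radial_rpow hΩ hφ hη hlam hρ hR₀ hm₁.le hu_cont hpos
  simp only [mul_assoc (_ ^ _)]
  exact le_mul_rpow_mul_of_mul_rpow_neg_mul_le hδ hR₀
    ((hφ.isConicalEigenfunction hΩ hρ).mul_sq_integral_rpow_le hη hρ hR hlam hm₀ hm₁.le hM₀.le
      (hM R hR₀) hu₂ hpos (by positivity) hfin hineq hint)

end APriori

end Cone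

/-- Proposition 3.1: a priori estimate for positive solutions of `(E)`. -/
theorem a_priori_estimate
    (N : ℕ) (hN : 2 ≤ N) (Ω : Set (Euc N)) (hΩ : IsConeDomain N Ω)
    (lam1 : ℝ) (φ : Euc N → ℝ) (hphi : DirichletEigenpair N Ω lam1 φ)
    (α p q ρ μ : ℝ) (hα : 0 ≤ α) (hαN : α < N) (hp : 0 < p) (hq : 0 < q) (hρ : 0 < ρ)
    (u : Euc N → ℝ) (hu : IsPosSolE N ρ μ α p q Ω u)
    (η : ℝ → ℝ) (hη : ContDiff ℝ 2 η) (hηc : HasCompactSupport η)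
    (hη01 : ∀ t, 0 ≤ η t ∧ η t ≤ 1) (hηsupp : tsupport η ⊆ Set.Icc 1 4)
    (hηone : ∀ t ∈ Set.Icc (2:ℝ) 3, η t = 1)
    (lam m : ℝ) (hlam : 4 < lam) (hm0 : 0 ≤ m) (hm1 : m < 1) :
    ∃ C > 0, ∀ R : ℝ, max ρ (Real.exp 1) < R →
      (∫ x in coneGT N ρ Ω,
          u x ^ ((p + q - m) / 2) * φ (‖x‖⁻¹ • x) ^ ((1:ℝ)/2) * η (‖x‖ / R) ^ (lam / 2)) ^ 2 ≤
        C * R ^ (α - 2) *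
          ∫ x in coneGT N ρ Ω,
            u x ^ (1 - m) * φ (‖x‖⁻¹ • x) * η (‖x‖ / R) ^ (lam - 2) := by
  obtain ⟨C, hC, h⟩ := a_priori_estimate_general hΩ.isOpen_cone hphi hα hρ.le hu
    ⟨hη, fun t ↦ (hη01 t).1, fun t ↦ (hη01 t).2, hηsupp⟩
    (by linarith : (2 : ℝ) < lam) hm0 hm1
  exact ⟨C, hC, fun R hR ↦ h R ((le_max_left _ _).trans_lt hR)⟩
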